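/- arXiv:1811.08972 — 4 statements merged into one kernel-verified Lean document; each statement's English description precedes it below -/
import Mathlib

section
/- There is a constant C > 0 such that for every integer n ≥ 4, the chromatic number of the associahedron A_n satisfies χ(A_n) ≤ C · log n. -/
/-!
The colouring combines two invariants of a triangulation. The level of a chord `{x, y}` is the
least `k` such that `x` and `y` lie in a common dyadic interval of length `2 ^ k`; it takes
`O(log n)` values. A flip replaces `{a, c}` by `{b, d}` with `a < b < c < d`, so if these two
diagonals have different levels, the sum of all levels, taken modulo a number exceeding every
level, changes.

If both have level `k + 1`, then all four vertices lie in one dyadic interval of length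
`2 ^ (k + 1)`, with `a < b` in its left half and `c < d` in its right half (`level_key`). The sides
`{b, c}` and `{a, d}` of the quadrilateral, which belong to both triangulations
(`quad_sides`), then also have level `k + 1`, so for every level the set of left endpoints of
chords of that level is unchanged. Moreover `a` and `b` are consecutive in this set, because a chord
of level `k + 1` starting strictly between them would cross the side `{a, b}`. Hence the sum over
all chords of the rank of the left endpoint among left endpoints of the same level changes by
exactly one, and its parity detects the flip. This gives a proper colouring with
`2 * (Nat.log 2 n + 2)` colours.
-/

/-- `e` is a chord of the convex `n`-gon: a 2-element subset of `{0, …, n-1}`. -/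
def IsChord (n : ℕ) (e : Finset ℕ) : Prop :=
  e.card = 2 ∧ ∀ x ∈ e, x < n

/-- `e` is a boundary edge of the `n`-gon, i.e. of the form `{i, (i+1) mod n}`. -/
def IsBoundaryEdge (n : ℕ) (e : Finset ℕ) : Prop :=
  ∃ i < n, e = ({i, (i + 1) % n} : Finset ℕ)

/-- `e` is a diagonal of the `n`-gon: a chord that is not a boundary edge. -/
def IsDiagonal (n : ℕ) (e : Finset ℕ) : Prop :=
  IsChord n e ∧ ¬ IsBoundaryEdge n e

/-- Two chords `{a,b}` (`a<b`) and `{c,d}` (`c<d`) cross if `a<c<b<d` or `c<a<d<b`. -/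
def Crosses (e f : Finset ℕ) : Prop :=
  ∃ a b c d : ℕ, a < b ∧ c < d ∧ e = ({a, b} : Finset ℕ) ∧ f = ({c, d} : Finset ℕ) ∧
    ((a < c ∧ c < b ∧ b < d) ∨ (c < a ∧ a < d ∧ d < b))

/-- `T` is a triangulation of the `n`-gon: the set of all `n` boundary edges together
with a maximal set of pairwise non-crossing diagonals. -/
def IsTriangulation (n : ℕ) (T : Finset (Finset ℕ)) : Prop :=
  (∀ e ∈ T, IsChord n e) ∧
  (∀ i < n, ({i, (i + 1) % n} : Finset ℕ) ∈ T) ∧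
  (∀ e ∈ T, ∀ f ∈ T, ¬ Crosses e f) ∧
  (∀ e, IsDiagonal n e → e ∉ T → ∃ f ∈ T, Crosses e f)

/-- The associahedron `𝒜ₙ`: vertices are the triangulations of the `n`-gon, with two
triangulations adjacent iff `|T \ T'| = |T' \ T| = 1` (i.e. they differ by one flip). -/
def Associahedron (n : ℕ) : SimpleGraph {T : Finset (Finset ℕ) // IsTriangulation n T} :=
  SimpleGraph.fromRel (fun T T' => (T.1 \ T'.1).card = 1 ∧ (T'.1 \ T.1).card = 1)

namespace AssocColoring

/-- The level of a set `e` of naturals: the least `k` such that all elements of `e` lie in a common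
dyadic interval `[2 ^ k * i, 2 ^ k * (i + 1))`. -/
noncomputable def lev (e : Finset ℕ) : ℕ :=
  sInf {k | ∀ x ∈ e, ∀ y ∈ e, x / 2 ^ k = y / 2 ^ k}

/-- The left endpoint of a chord, i.e. its least element. -/
noncomputable def lo (e : Finset ℕ) : ℕ := sInf (e : Set ℕ)

/-- The set of left endpoints of the chords of level `l` in `T`. -/
noncomputable def leftEnds (T : Finset (Finset ℕ)) (l : ℕ) : Finset ℕ :=
  (T.filter (fun f => lev f = l)).image lo

/-- The rank of `z` in `X`, counted from the right: the number of elements of `X` beyond `z`. -/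
def rk (X : Finset ℕ) (z : ℕ) : ℕ := (X.filter (fun x => z < x)).card

/-- The sum over all chords in `T` of the rank of the left endpoint among the left endpoints of
chords of the same level. -/
noncomputable def rankSum (T : Finset (Finset ℕ)) : ℕ :=
  ∑ e ∈ T, rk (leftEnds T (lev e)) (lo e)

lemma lo_pair {a b : ℕ} (h : a < b) : lo {a, b} = a := by
  unfold lo
  rw [Finset.coe_pair, csInf_pair]
  exact min_eq_left h.le

lemma lev_le {n k : ℕ} (hn : n ≤ 2 ^ k) {e : Finset ℕ} (he : ∀ x ∈ e, x < n) : lev e ≤ k := by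
  apply Nat.sInf_le
  intro x hx y hy
  rw [Nat.div_eq_of_lt ((he x hx).trans_le hn), Nat.div_eq_of_lt ((he y hy).trans_le hn)]

lemma pair_div_iff (a b k : ℕ) :
    (∀ x ∈ ({a, b} : Finset ℕ), ∀ y ∈ ({a, b} : Finset ℕ), x / 2 ^ k = y / 2 ^ k) ↔
      a / 2 ^ k = b / 2 ^ k := by
  constructor
  · intro h
    exact h a (by simp) b (by simp)
  · intro h x hx y hy
    simp only [Finset.mem_insert, Finset.mem_singleton] at hx hy
    rcases hx with rfl | rfl <;> rcases hy with rfl | rfl <;> simp [h]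

lemma lev_pair (a b : ℕ) : lev {a, b} = sInf {k | a / 2 ^ k = b / 2 ^ k} := by
  unfold lev
  simp only [pair_div_iff]

/-- A pair has level `k + 1` exactly when its elements occupy the left and the right half of a
dyadic interval of length `2 ^ (k + 1)`. -/
lemma lev_eq_succ_iff {a b : ℕ} (h : a < b) (k : ℕ) :
    lev {a, b} = k + 1 ↔ b / 2 ^ k = a / 2 ^ k + 1 ∧ (a / 2 ^ k) % 2 = 0 := by
  have hdd : ∀ x : ℕ, x / 2 ^ (k + 1) = x / 2 ^ k / 2 := fun x => by
    rw [pow_succ, Nat.div_div_eq_div_mul]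
  have hle : a / 2 ^ k ≤ b / 2 ^ k := Nat.div_le_div_right h.le
  rw [lev_pair]
  constructor
  · intro hl
    have h1 : k + 1 ∈ {k | a / 2 ^ k = b / 2 ^ k} := by
      rw [← hl]
      apply Nat.sInf_mem
      by_contra hne
      rw [Set.not_nonempty_iff_eq_empty] at hne
      rw [hne, Nat.sInf_empty] at hl
      omega
    have h2 : k ∉ {k | a / 2 ^ k = b / 2 ^ k} := Nat.notMem_of_lt_sInf (by omega)
    simp only [Set.mem_ofPred_eq, hdd] at h1 h2
    omega
  · rintro ⟨h1, h2⟩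
    apply le_antisymm
    · apply Nat.sInf_le
      simp only [Set.mem_ofPred_eq, hdd]
      omega
    · apply le_csInf
      · exact ⟨k + 1, by simp only [Set.mem_ofPred_eq, hdd]; omega⟩
      · intro j hj
        by_contra hlt
        -- Agreement at a smaller scale `2 ^ j` would force agreement at scale `2 ^ k`.
        have hjk : 2 ^ k = 2 ^ j * 2 ^ (k - j) := by
          rw [← pow_add]; congr 1; omega
        have hj' : a / 2 ^ j = b / 2 ^ j := hj
        have : a / 2 ^ k = b / 2 ^ k := by
          rw [hjk, ← Nat.div_div_eq_div_mul, ← Nat.div_div_eq_div_mul, hj']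
        omega

lemma lev_pos {a b : ℕ} (h : a < b) : lev {a, b} ≠ 0 := by
  intro h0
  rw [lev_pair, Nat.sInf_eq_zero] at h0
  rcases h0 with h0 | h0
  · simp at h0
    omega
  · have : b ∈ ({k | a / 2 ^ k = b / 2 ^ k} : Set ℕ) := by
      have hb : b < 2 ^ b := Nat.lt_two_pow_self
      simp [Nat.div_eq_of_lt hb, Nat.div_eq_of_lt (h.trans hb)]
    rw [h0] at this
    exact this

/-- If the crossing pairs `{a, c}` and `{b, d}` have the same level, then `a`, `b` lie in the left
half and `c`, `d` in the right half of the same dyadic interval. -/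
lemma level_key {a b c d : ℕ} (hab : a < b) (hbc : b < c) (hcd : c < d)
    (h : lev {a, c} = lev {b, d}) :
    lev {b, c} = lev {a, c} ∧ lev {a, d} = lev {a, c} ∧
      ∀ x y, a < x → x < b → x < y → lev {x, y} = lev {a, c} → b < y := by
  obtain ⟨k, hk⟩ := Nat.exists_eq_succ_of_ne_zero (lev_pos (hab.trans hbc))
  have hk' : lev {b, d} = k + 1 := h ▸ hk
  have e1 := (lev_eq_succ_iff (hab.trans hbc) k).1 hk
  have e2 := (lev_eq_succ_iff (hbc.trans hcd) k).1 hk'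
  have i1 : a / 2 ^ k ≤ b / 2 ^ k := Nat.div_le_div_right hab.le
  have i2 : b / 2 ^ k ≤ c / 2 ^ k := Nat.div_le_div_right hbc.le
  have i3 : c / 2 ^ k ≤ d / 2 ^ k := Nat.div_le_div_right hcd.le
  rw [hk]
  refine ⟨(lev_eq_succ_iff hbc k).2 (by omega),
    (lev_eq_succ_iff (hab.trans (hbc.trans hcd)) k).2 (by omega), ?_⟩
  intro x y hax hxb hxy hl
  have e3 := (lev_eq_succ_iff hxy k).1 hl
  have i4 : a / 2 ^ k ≤ x / 2 ^ k := Nat.div_le_div_right hax.le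
  have i5 : x / 2 ^ k ≤ b / 2 ^ k := Nat.div_le_div_right hxb.le
  by_contra hby
  have i6 : y / 2 ^ k ≤ b / 2 ^ k := Nat.div_le_div_right (not_lt.1 hby)
  omega

lemma pair_inj {a b c d : ℕ} (hab : a < b) (hcd : c < d)
    (h : ({a, b} : Finset ℕ) = {c, d}) : a = c ∧ b = d := by
  have h1 : a ∈ ({c, d} : Finset ℕ) := h ▸ (by simp)
  have h2 : b ∈ ({c, d} : Finset ℕ) := h ▸ (by simp)
  simp only [Finset.mem_insert, Finset.mem_singleton] at h1 h2
  omega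

lemma exists_pair {n : ℕ} {e : Finset ℕ} (he : IsChord n e) :
    ∃ x y, x < y ∧ e = {x, y} ∧ y < n := by
  obtain ⟨x, y, hxy, rfl⟩ := Finset.card_eq_two.1 he.1
  have hx := he.2 x (by simp)
  have hy := he.2 y (by simp)
  rcases lt_or_gt_of_ne hxy with h | h
  · exact ⟨x, y, h, rfl, hy⟩
  · exact ⟨y, x, h, Finset.pair_comm x y, hx⟩

/-- Maximality: a chord crossed by no chord of a triangulation belongs to it. -/
lemma mem_of_noncross {n : ℕ} {T : Finset (Finset ℕ)} (hT : IsTriangulation n T) {p q : ℕ}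
    (hpq : p < q) (hq : q < n)
    (h : ∀ x y, x < y → ({x, y} : Finset ℕ) ∈ T →
      ¬ ((p < x ∧ x < q ∧ q < y) ∨ (x < p ∧ p < y ∧ y < q))) :
    ({p, q} : Finset ℕ) ∈ T := by
  by_contra hm
  have hd : IsDiagonal n {p, q} := by
    refine ⟨⟨Finset.card_pair hpq.ne, ?_⟩, ?_⟩
    · intro x hx
      simp only [Finset.mem_insert, Finset.mem_singleton] at hx
      omega
    · rintro ⟨i, hi, he⟩
      exact hm (he ▸ hT.2.1 i hi)
  obtain ⟨f, hf, a, b, c, d, hab, hcd, he, rfl, hc⟩ := hT.2.2.2 _ hd hm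
  obtain ⟨rfl, rfl⟩ := pair_inj hpq hab he
  exact h c d hcd hf hc

/-- In a flip replacing `{a, c}` by `{b, d}`, the sides of the quadrilateral `abcd` are present. -/
lemma quad_sides {n : ℕ} {T T' : Finset (Finset ℕ)} (hT : IsTriangulation n T)
    (hT' : IsTriangulation n T') {a b c d : ℕ} (hab : a < b) (hbc : b < c) (hcd : c < d)
    (h1 : T \ T' = {{a, c}}) (h2 : T' \ T = {{b, d}}) :
    ({a, b} : Finset ℕ) ∈ T ∧ ({b, c} : Finset ℕ) ∈ T ∧ ({a, d} : Finset ℕ) ∈ T := by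
  have hac : ({a, c} : Finset ℕ) ∈ T \ T' := by simp [h1]
  have hbd : ({b, d} : Finset ℕ) ∈ T' \ T := by simp [h2]
  have hdn : d < n := (hT'.1 _ (Finset.mem_sdiff.1 hbd).1).2 d (by simp)
  have key : ∀ x y, x < y → ({x, y} : Finset ℕ) ∈ T → (x = a ∧ y = c) ∨
      (¬ (a < x ∧ x < c ∧ c < y) ∧ ¬ (x < a ∧ a < y ∧ y < c) ∧
       ¬ (b < x ∧ x < d ∧ d < y) ∧ ¬ (x < b ∧ b < y ∧ y < d)) := by
    intro x y hxy hm
    by_cases hm' : ({x, y} : Finset ℕ) ∈ T'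
    · right
      have n1 := hT.2.2.1 _ (Finset.mem_sdiff.1 hac).1 _ hm
      have n2 := hT'.2.2.1 _ (Finset.mem_sdiff.1 hbd).1 _ hm'
      refine ⟨fun h => n1 ?_, fun h => n1 ?_, fun h => n2 ?_, fun h => n2 ?_⟩
      · exact ⟨a, c, x, y, by omega, hxy, rfl, rfl, Or.inl h⟩
      · exact ⟨a, c, x, y, by omega, hxy, rfl, rfl, Or.inr h⟩
      · exact ⟨b, d, x, y, by omega, hxy, rfl, rfl, Or.inl h⟩
      · exact ⟨b, d, x, y, by omega, hxy, rfl, rfl, Or.inr h⟩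
    · left
      have : ({x, y} : Finset ℕ) ∈ T \ T' := Finset.mem_sdiff.2 ⟨hm, hm'⟩
      rw [h1, Finset.mem_singleton] at this
      exact pair_inj hxy (by omega) this
  refine ⟨?_, ?_, ?_⟩
  · refine mem_of_noncross hT hab (by omega) fun x y hxy hm => ?_
    have := key x y hxy hm
    omega
  · refine mem_of_noncross hT hbc (by omega) fun x y hxy hm => ?_
    have := key x y hxy hm
    omega
  · refine mem_of_noncross hT (by omega) hdn fun x y hxy hm => ?_
    have := key x y hxy hm
    omega

/-- A flip between diagonals of different levels changes the sum of levels; a flip between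
diagonals of equal levels changes `rankSum` by one. -/
lemma flip_invariants {n m : ℕ} (hm : ∀ e, IsChord n e → lev e < m) {T T' : Finset (Finset ℕ)}
    (hT : IsTriangulation n T) (hT' : IsTriangulation n T') {a b c d : ℕ}
    (hab : a < b) (hbc : b < c) (hcd : c < d)
    (h1 : T \ T' = {{a, c}}) (h2 : T' \ T = {{b, d}}) :
    (∑ e ∈ T, lev e) % m ≠ (∑ e ∈ T', lev e) % m ∨ rankSum T % 2 ≠ rankSum T' % 2 := by
  have sumT : ∀ g : Finset ℕ → ℕ, ∑ e ∈ T, g e = (∑ e ∈ T ∩ T', g e) + g {a, c} := by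
    intro g
    rw [← Finset.sum_inter_add_sum_sdiff T T' g, h1, Finset.sum_singleton]
  have sumT' : ∀ g : Finset ℕ → ℕ, ∑ e ∈ T', g e = (∑ e ∈ T ∩ T', g e) + g {b, d} := by
    intro g
    rw [← Finset.sum_inter_add_sum_sdiff T' T g, h2, Finset.sum_singleton, Finset.inter_comm]
  have hac : ({a, c} : Finset ℕ) ∈ T \ T' := by simp [h1]
  have hbd : ({b, d} : Finset ℕ) ∈ T' \ T := by simp [h2]
  rw [Finset.mem_sdiff] at hac hbd
  by_cases hl : lev {a, c} = lev {b, d}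
  swap
  · left
    rw [sumT, sumT']
    intro h
    have h' : lev {a, c} ≡ lev {b, d} [MOD m] := Nat.ModEq.add_left_cancel' _ h
    exact hl (h'.eq_of_lt_of_lt (hm _ (hT.1 _ hac.1)) (hm _ (hT'.1 _ hbd.1)))
  right
  obtain ⟨kbc, kad, kx⟩ := level_key hab hbc hcd hl
  obtain ⟨mab, mbc, mad⟩ := quad_sides hT hT' hab hbc hcd h1 h2
  have stay : ∀ e ∈ T, e ≠ {a, c} → e ∈ T' := by
    intro e he hne
    by_contra hn
    have : e ∈ T \ T' := Finset.mem_sdiff.2 ⟨he, hn⟩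
    rw [h1, Finset.mem_singleton] at this
    exact hne this
  have mad' : ({a, d} : Finset ℕ) ∈ T' := stay _ mad fun h => by
    have := pair_inj (by omega) (by omega) h
    omega
  have hX : ∀ l, leftEnds T l = leftEnds T' l := by
    intro l
    ext z
    simp only [leftEnds, Finset.mem_image, Finset.mem_filter]
    constructor
    · rintro ⟨g, ⟨hg, hgl⟩, hz⟩
      by_cases hga : g = {a, c}
      · subst hga
        refine ⟨{a, d}, ⟨mad', kad.trans hgl⟩, ?_⟩
        rw [← hz, lo_pair (by omega), lo_pair (by omega)]
      · exact ⟨g, ⟨stay g hg hga, hgl⟩, hz⟩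
    · rintro ⟨g, ⟨hg, hgl⟩, hz⟩
      by_cases hgT : g ∈ T
      · exact ⟨g, ⟨hgT, hgl⟩, hz⟩
      · have : g ∈ T' \ T := Finset.mem_sdiff.2 ⟨hg, hgT⟩
        rw [h2, Finset.mem_singleton] at this
        subst this
        refine ⟨{b, c}, ⟨mbc, by rw [kbc, hl, hgl]⟩, ?_⟩
        rw [← hz, lo_pair (by omega), lo_pair (by omega)]
  -- `b` is the immediate successor of `a` among the left endpoints of this level.
  have hrk : rk (leftEnds T (lev {a, c})) a = rk (leftEnds T (lev {a, c})) b + 1 := by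
    unfold rk
    rw [← Finset.card_insert_of_notMem (a := b) (by simp)]
    congr 1
    ext z
    simp only [Finset.mem_insert, Finset.mem_filter]
    constructor
    · rintro ⟨hz, haz⟩
      by_contra hcon
      have hzb : z < b := by
        by_contra hzb
        apply hcon
        rcases eq_or_lt_of_le (not_lt.1 hzb) with h | h
        · exact Or.inl h.symm
        · exact Or.inr ⟨hz, h⟩
      simp only [leftEnds, Finset.mem_image, Finset.mem_filter] at hz
      obtain ⟨g, ⟨hg, hgl⟩, hgz⟩ := hz
      obtain ⟨x, y, hxy, rfl, -⟩ := exists_pair (hT.1 g hg)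
      rw [lo_pair hxy] at hgz
      subst hgz
      have hby := kx x y haz hzb hxy hgl
      exact hT.2.2.1 _ mab _ hg ⟨a, b, x, y, hab, hxy, rfl, rfl, Or.inl ⟨haz, hzb, hby⟩⟩
    · rintro (rfl | ⟨hz, hbz⟩)
      · refine ⟨?_, hab⟩
        simp only [leftEnds, Finset.mem_image, Finset.mem_filter]
        exact ⟨{z, c}, ⟨mbc, kbc⟩, lo_pair hbc⟩
      · exact ⟨hz, hab.trans hbz⟩
  have e1 := sumT fun e => rk (leftEnds T (lev e)) (lo e)
  have e2 := sumT' fun e => rk (leftEnds T (lev e)) (lo e)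
  rw [lo_pair (by omega : a < c), hrk] at e1
  rw [lo_pair (by omega : b < d), ← hl] at e2
  have e3 : rankSum T' = ∑ e ∈ T', rk (leftEnds T (lev e)) (lo e) := by
    unfold rankSum
    simp only [hX]
  rw [e3, rankSum, e1, e2]
  omega

lemma adj_invariants {n m : ℕ} (hm : ∀ e, IsChord n e → lev e < m) {T T' : Finset (Finset ℕ)}
    (hT : IsTriangulation n T) (hT' : IsTriangulation n T')
    (h1 : (T \ T').card = 1) (h2 : (T' \ T).card = 1) :
    (∑ e ∈ T, lev e) % m ≠ (∑ e ∈ T', lev e) % m ∨ rankSum T % 2 ≠ rankSum T' % 2 := by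
  obtain ⟨e, he⟩ := Finset.card_eq_one.1 h1
  obtain ⟨f, hf⟩ := Finset.card_eq_one.1 h2
  have hfm : f ∈ T' \ T := by simp [hf]
  rw [Finset.mem_sdiff] at hfm
  have hfd : IsDiagonal n f := by
    refine ⟨hT'.1 f hfm.1, ?_⟩
    rintro ⟨i, hi, rfl⟩
    exact hfm.2 (hT.2.1 i hi)
  obtain ⟨g, hg, hcr⟩ := hT.2.2.2 f hfd hfm.2
  -- The chord of `T` crossing `f` cannot lie in `T'`, so it is the flipped diagonal.
  have hge : g ∈ T \ T' := Finset.mem_sdiff.2 ⟨hg, fun h => hT'.2.2.1 _ hfm.1 _ h hcr⟩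
  rw [he, Finset.mem_singleton] at hge
  subst hge
  obtain ⟨a, b, c, d, hab, hcd, rfl, rfl, hc | hc⟩ := hcr
  · have := flip_invariants hm hT' hT hc.1 hc.2.1 hc.2.2 hf he
    exact this.imp Ne.symm Ne.symm
  · exact flip_invariants hm hT hT' hc.1 hc.2.1 hc.2.2 he hf

lemma colorable (n : ℕ) : (Associahedron n).Colorable (2 * (Nat.log 2 n + 2)) := by
  set m := Nat.log 2 n + 2 with hmdef
  have hm : ∀ e, IsChord n e → lev e < m := by
    intro e he
    have := lev_le (Nat.lt_pow_succ_log_self one_lt_two n).le he.2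
    omega
  have hm0 : 0 < m := by omega
  let C : (Associahedron n).Coloring (Fin 2 × Fin m) := SimpleGraph.Coloring.mk
    (fun T => (⟨rankSum T.1 % 2, Nat.mod_lt _ two_pos⟩, ⟨(∑ e ∈ T.1, lev e) % m, Nat.mod_lt _ hm0⟩))
    (by
      intro T T' hadj heq
      rw [Associahedron, SimpleGraph.fromRel_adj] at hadj
      simp only [Prod.mk.injEq, Fin.mk.injEq] at heq
      have hc : (T.1 \ T'.1).card = 1 ∧ (T'.1 \ T.1).card = 1 := by tauto
      have := adj_invariants hm T.2 T'.2 hc.1 hc.2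
      tauto)
  have := C.colorable
  simpa using this

end AssocColoring

/-- There is a constant `C > 0` such that for every `n ≥ 4` the chromatic number of the
`n`-th associahedron satisfies `χ(𝒜ₙ) ≤ C · log n`. -/
theorem chromaticNumber_associahedron_le_const_mul_log :
    ∃ C : ℝ, 0 < C ∧ ∀ n : ℕ, 4 ≤ n →
      (Associahedron n).chromaticNumber ≤ (⌊C * Real.log n⌋₊ : ℕ∞) := by
  have h2 : 0 < Real.log 2 := Real.log_pos one_lt_two
  refine ⟨4 / Real.log 2, by positivity, fun n hn => ?_⟩
  refine (AssocColoring.colorable n).chromaticNumber_le.trans ?_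
  rw [Nat.cast_le]
  apply Nat.le_floor
  have hn0 : n ≠ 0 := by omega
  have hlog : (Nat.log 2 n : ℝ) * Real.log 2 ≤ Real.log n := by
    rw [← Real.log_pow]
    apply Real.log_le_log (by positivity)
    exact_mod_cast Nat.pow_log_le_self 2 hn0
  have h4 : 2 * Real.log 2 ≤ Real.log n := by
    have h : Real.log ((2 : ℝ) ^ 2) ≤ Real.log n := by
      apply Real.log_le_log (by positivity)
      norm_num
      exact_mod_cast hn
    rw [Real.log_pow] at h
    exact_mod_cast h
  rw [div_mul_eq_mul_div, le_div_iff₀ h2]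
  push_cast
  nlinarith
end

section
/- For every integer n ≥ 4, the chromatic number of the associahedron A_n satisfies χ(A_n) ≤ 12 · 129 · ⌈3 · log_3 n⌉. -/
namespace AssocColour

/-! ### Chords as ordered pairs, and the colour -/

/-- The scale `⌊log₂ (y - x)⌋` of the chord `(x, y)`. -/
def sc (p : ℕ × ℕ) : ℕ := Nat.log 2 (p.2 - p.1)

/-- The left chords of `S`: those `(x, y)` for which some `(x, y')` with `y' > y` is in `S`. -/
def lefts (S : Finset (ℕ × ℕ)) : Finset (ℕ × ℕ) :=
  S.filter fun p => ∃ q ∈ S, q.1 = p.1 ∧ p.2 < q.2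

/-- The number of chords of `S` nested in `p` (`p` itself included) with the same scale as `p`. -/
def rank (S : Finset (ℕ × ℕ)) (p : ℕ × ℕ) : ℕ :=
  (S.filter fun q => sc q = sc p ∧ p.1 ≤ q.1 ∧ q.2 ≤ p.2).card

/-- The colour of a set of chords of the `n`-gon: scales, positions of left and of right endpoints
on the grid of mesh a quarter of `2 ^ scale`, scales of left chords, ranks of left chords. -/
def colour (n : ℕ) (S : Finset (ℕ × ℕ)) :
    ZMod (Nat.log 2 n + 1) × ZMod 9 × ZMod 9 × ZMod 2 × ZMod 2 :=
  (((∑ p ∈ S, sc p : ℕ) : ZMod _), ((∑ p ∈ S, 4 * p.1 / 2 ^ sc p : ℕ) : ZMod _),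
    ((∑ p ∈ S, 4 * p.2 / 2 ^ sc p : ℕ) : ZMod _), ((∑ p ∈ lefts S, sc p : ℕ) : ZMod _),
    ((∑ p ∈ lefts S, rank S p : ℕ) : ZMod _))

/-- Crossing of chords written as ordered pairs. -/
def X (p q : ℕ × ℕ) : Prop :=
  (p.1 < q.1 ∧ q.1 < p.2 ∧ p.2 < q.2) ∨ (q.1 < p.1 ∧ p.1 < q.2 ∧ q.2 < p.2)

/-- The chords common to two triangulations which differ by the flip `(a, c) ↔ (b, d)`. -/
structure FlipData (Z : Finset (ℕ × ℕ)) (a b c d : ℕ) : Prop where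
  ab : a < b
  bc : b < c
  cd : c < d
  lt : ∀ p ∈ Z, p.1 < p.2
  nac : ∀ p ∈ Z, ¬ X p (a, c)
  nbd : ∀ p ∈ Z, ¬ X p (b, d)
  mbc : (b, c) ∈ Z
  mad : (a, d) ∈ Z
  hac : (a, c) ∉ Z
  hbd : (b, d) ∉ Z

/-! ### The colour changes under a flip -/

section Core

variable {Z : Finset (ℕ × ℕ)} {a b c d : ℕ}

lemma sc_bounds {p : ℕ × ℕ} (h : p.1 < p.2) :
    2 ^ sc p ≤ p.2 - p.1 ∧ p.2 - p.1 < 2 * 2 ^ sc p := by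
  refine ⟨Nat.pow_log_le_self 2 (by omega), ?_⟩
  have := Nat.lt_pow_succ_log_self (b := 2) (by norm_num) (p.2 - p.1)
  rw [pow_succ] at this
  unfold sc
  omega

lemma FlipData.bc_not_left (h : FlipData Z a b c d) : (b, c) ∉ lefts Z := by
  intro hm
  obtain ⟨_, ⟨x, y⟩, hq, h1, h2⟩ := Finset.mem_filter.1 hm
  have := h.nac _ hq
  have := h.ab
  have := h.bc
  simp only [X] at *
  omega

lemma FlipData.lefts_ac (h : FlipData Z a b c d) :
    lefts (insert (a, c) Z) = insert (a, c) (lefts Z) := by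
  have h1 := h.ab; have h2 := h.bc; have h3 := h.cd
  ext ⟨x, y⟩
  simp only [lefts, Finset.mem_filter, Finset.mem_insert, Prod.mk.injEq]
  constructor
  · rintro ⟨hp | hp, q, hq | hq, e1, e2⟩
    · exact Or.inl hp
    · exact Or.inl hp
    · subst hq
      exact Or.inr ⟨hp, (a, d), h.mad, e1, by simp only at *; omega⟩
    · exact Or.inr ⟨hp, q, hq, e1, e2⟩
  · rintro (⟨rfl, rfl⟩ | ⟨hp, q, hq, e1, e2⟩)
    · exact ⟨Or.inl ⟨rfl, rfl⟩, (x, d), Or.inr h.mad, rfl, h3⟩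
    · exact ⟨Or.inr hp, q, Or.inr hq, e1, e2⟩

lemma FlipData.lefts_bd (h : FlipData Z a b c d) :
    lefts (insert (b, d) Z) = insert (b, c) (lefts Z) := by
  have h1 := h.ab; have h2 := h.bc; have h3 := h.cd
  ext ⟨x, y⟩
  simp only [lefts, Finset.mem_filter, Finset.mem_insert, Prod.mk.injEq]
  constructor
  · rintro ⟨hp | hp, q, hq | hq, e1, e2⟩
    · subst hq; simp only at *; omega
    · exfalso
      have := h.nac _ hq
      simp only [X] at *
      omega
    · subst hq
      have := h.nac _ hp
      simp only [X] at *
      rcases lt_trichotomy y c with hy | hy | hy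
      · exact Or.inr ⟨hp, (b, c), h.mbc, e1, hy⟩
      · exact Or.inl ⟨e1.symm, hy⟩
      · omega
    · exact Or.inr ⟨hp, q, hq, e1, e2⟩
  · rintro (⟨rfl, rfl⟩ | ⟨hp, q, hq, e1, e2⟩)
    · exact ⟨Or.inr h.mbc, (x, d), Or.inl rfl, rfl, h3⟩
    · exact ⟨Or.inr hp, q, Or.inr hq, e1, e2⟩

/-- A common chord contains `(a, c)` exactly when it contains `(b, d)`, so a flip within one scale
does not affect its rank. -/
lemma FlipData.rank_eq (h : FlipData Z a b c d) (hs : sc (a, c) = sc (b, d)) {p : ℕ × ℕ}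
    (hp : p ∈ Z) : rank (insert (a, c) Z) p = rank (insert (b, d) Z) p := by
  have h1 := h.ab; have h2 := h.bc; have h3 := h.cd
  have n1 := h.nac _ hp
  have n2 := h.nbd _ hp
  have hlt := h.lt _ hp
  simp only [X] at n1 n2
  unfold rank
  rw [Finset.filter_insert, Finset.filter_insert]
  have key : (sc (a, c) = sc p ∧ p.1 ≤ a ∧ c ≤ p.2) ↔ (sc (b, d) = sc p ∧ p.1 ≤ b ∧ d ≤ p.2) := by
    rw [hs]
    refine and_congr_right fun hsp => ?_
    obtain ⟨x, y⟩ := p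
    have hx : (x, y) ≠ (a, c) := fun e => h.hac (e ▸ hp)
    have hx' : (x, y) ≠ (b, d) := fun e => h.hbd (e ▸ hp)
    simp only [ne_eq, Prod.mk.injEq] at *
    omega
  by_cases hk : sc (a, c) = sc p ∧ p.1 ≤ a ∧ c ≤ p.2
  · rw [if_pos hk, if_pos (key.1 hk), Finset.card_insert_of_notMem, Finset.card_insert_of_notMem]
    · exact fun hm => h.hbd (Finset.mem_filter.1 hm).1
    · exact fun hm => h.hac (Finset.mem_filter.1 hm).1
  · rw [if_neg hk, if_neg (fun hh => hk (key.2 hh))]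

/-- If `(a, c)` and `(b, c)` have the same scale, no chord of that scale fits into `(a, b)`. -/
lemma FlipData.rank_ac (h : FlipData Z a b c d) (hs : sc (b, c) = sc (a, c)) :
    rank (insert (a, c) Z) (a, c) = rank (insert (b, d) Z) (b, c) + 1 := by
  have h1 := h.ab; have h2 := h.bc; have h3 := h.cd
  unfold rank
  rw [Finset.filter_insert, Finset.filter_insert, if_pos ⟨rfl, le_rfl, le_rfl⟩,
    if_neg (by simp only; omega), Finset.card_insert_of_notMem
      (fun hm => h.hac (Finset.mem_filter.1 hm).1)]
  congr 2
  ext ⟨x, y⟩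
  simp only [Finset.mem_filter]
  refine and_congr_right fun hp => ?_
  rw [hs]
  refine and_congr_right fun hsp => ?_
  refine ⟨fun hh => ?_, fun hh => by omega⟩
  have n2 := h.nbd _ hp
  have n3 : (x, y) ≠ (a, c) := fun e => h.hac (e ▸ hp)
  have hlt := h.lt _ hp
  have b1 := sc_bounds (p := (a, c)) (by simp only; omega)
  have b2 := sc_bounds (p := (b, c)) (by simp only; omega)
  have b3 := sc_bounds hlt
  rw [hs] at b2
  rw [hsp] at b3
  simp only [X, ne_eq, Prod.mk.injEq] at *
  omega

lemma natCast_ne {k u v : ℕ} (huv : u < v) (hk : v < u + k) (s : ℕ) :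
    ((u + s : ℕ) : ZMod k) ≠ ((v + s : ℕ) : ZMod k) := by
  intro e
  rw [ZMod.natCast_eq_natCast_iff] at e
  have := (Nat.modEq_iff_dvd' (by omega)).1 e
  have := Nat.le_of_dvd (by omega) this
  omega

/-- Points at distance at least `P / 4` and less than `2P` lie in different cells of the grid of
mesh `P / 4`, and their cells remain distinct modulo `9`. -/
lemma grid_ne {P u v : ℕ} (hP : 0 < P) (h1 : P ≤ 4 * (v - u)) (h2 : v - u < 2 * P) (s : ℕ) :
    ((4 * u / P + s : ℕ) : ZMod 9) ≠ ((4 * v / P + s : ℕ) : ZMod 9) := by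
  apply natCast_ne
  · have : 4 * u / P + 1 = (4 * u + P) / P := by rw [Nat.add_div_right _ hP]
    have : (4 * u + P) / P ≤ 4 * v / P := Nat.div_le_div_right (by omega)
    omega
  · rw [Nat.div_lt_iff_lt_mul hP]
    have := Nat.div_add_mod (4 * u) P
    have := Nat.mod_lt (4 * u) hP
    have : (4 * u / P + 9) * P = P * (4 * u / P) + 9 * P := by ring
    omega

theorem FlipData.colour_ne (h : FlipData Z a b c d) {n : ℕ} (hn : d < n) :
    colour n (insert (a, c) Z) ≠ colour n (insert (b, d) Z) := by
  have h1 := h.ab; have h2 := h.bc; have h3 := h.cd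
  intro e
  simp only [colour, Prod.mk.injEq, h.lefts_ac, h.lefts_bd, Finset.sum_insert h.hac,
    Finset.sum_insert h.hbd, Finset.sum_insert h.bc_not_left,
    Finset.sum_insert (fun hm => h.hac (Finset.mem_filter.1 hm).1 : (a, c) ∉ lefts Z)] at e
  obtain ⟨eA, eB, eC, eD, eG⟩ := e
  have hs : sc (a, c) = sc (b, d) := by
    have l1 : sc (a, c) ≤ Nat.log 2 n := Nat.log_mono_right (by simp only; omega)
    have l2 : sc (b, d) ≤ Nat.log 2 n := Nat.log_mono_right (by simp only; omega)
    rcases lt_trichotomy (sc (a, c)) (sc (b, d)) with hlt | heq | hlt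
    · exact absurd eA (natCast_ne hlt (by omega) _)
    · exact heq
    · exact absurd eA.symm (natCast_ne hlt (by omega) _)
  have b1 := sc_bounds (p := (a, c)) (by simp only; omega)
  have b2 := sc_bounds (p := (b, d)) (by simp only; omega)
  have b3 := sc_bounds (p := (b, c)) (by simp only; omega)
  rw [← hs] at b2 eB eC
  have hP : 0 < 2 ^ sc (a, c) := by positivity
  simp only at b1 b2 b3
  have hab : 4 * (b - a) < 2 ^ sc (a, c) := by
    by_contra hh
    exact grid_ne hP (not_lt.1 hh) (by omega) _ eB
  have hcd : 4 * (d - c) < 2 ^ sc (a, c) := by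
    by_contra hh
    exact grid_ne hP (not_lt.1 hh) (by omega) _ eC
  have hle : sc (b, c) ≤ sc (a, c) := Nat.log_mono_right (by simp only; omega)
  have hge : sc (a, c) ≤ sc (b, c) + 1 := by
    have : 2 ^ sc (a, c) < 2 ^ (sc (b, c) + 2) := by
      rw [pow_add]; omega
    have := (Nat.pow_lt_pow_iff_right (by norm_num : 1 < 2)).1 this
    omega
  rcases hle.lt_or_eq with hlt | heq
  · exact natCast_ne hlt (by omega) _ eD.symm
  · have hsum : ∑ p ∈ lefts Z, rank (insert (a, c) Z) p = ∑ p ∈ lefts Z, rank (insert (b, d) Z) p :=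
      Finset.sum_congr rfl fun p hp => h.rank_eq hs (Finset.mem_filter.1 hp).1
    rw [h.rank_ac heq, hsum] at eG
    exact natCast_ne (Nat.lt_succ_self _) (by omega) _ eG.symm

end Core

/-! ### Flips of triangulations -/

section Flip

variable {n : ℕ} {T T' : Finset (Finset ℕ)}

/-- The members of `T` which are chords of the `n`-gon, written as ordered pairs. -/
def pairs (n : ℕ) (T : Finset (Finset ℕ)) : Finset (ℕ × ℕ) :=
  (Finset.range n ×ˢ Finset.range n).filter fun p => p.1 < p.2 ∧ ({p.1, p.2} : Finset ℕ) ∈ T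

lemma mem_pairs {x y : ℕ} :
    (x, y) ∈ pairs n T ↔ y < n ∧ x < y ∧ ({x, y} : Finset ℕ) ∈ T := by
  simp only [pairs, Finset.mem_filter, Finset.mem_product, Finset.mem_range]
  constructor
  · rintro ⟨⟨_, h2⟩, h3, h4⟩
    exact ⟨h2, h3, h4⟩
  · rintro ⟨h2, h3, h4⟩
    exact ⟨⟨by omega, h2⟩, h3, h4⟩

lemma pair_inj {x y u v : ℕ} (h : x < y) (h' : u < v) :
    ({x, y} : Finset ℕ) = {u, v} ↔ x = u ∧ y = v := by
  constructor
  · intro e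
    have e1 : x ∈ ({u, v} : Finset ℕ) := e ▸ by simp
    have e2 : y ∈ ({u, v} : Finset ℕ) := e ▸ by simp
    simp only [Finset.mem_insert, Finset.mem_singleton] at e1 e2
    omega
  · rintro ⟨rfl, rfl⟩; rfl

lemma crosses_iff {x y u v : ℕ} (h : x < y) (h' : u < v) :
    Crosses {x, y} {u, v} ↔ X (x, y) (u, v) := by
  constructor
  · rintro ⟨a, b, c, d, hab, hcd, e1, e2, hh⟩
    obtain ⟨rfl, rfl⟩ := (pair_inj h hab).1 e1
    obtain ⟨rfl, rfl⟩ := (pair_inj h' hcd).1 e2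
    exact hh
  · intro hh
    exact ⟨x, y, u, v, h, h', rfl, rfl, hh⟩

/-- A chord crossing no chord of a triangulation belongs to it. -/
lemma mem_of_not_crosses (hT : IsTriangulation n T) {x y : ℕ} (hxy : x < y) (hy : y < n)
    (h : ∀ u v, u < v → ({u, v} : Finset ℕ) ∈ T → ¬ X (x, y) (u, v)) :
    ({x, y} : Finset ℕ) ∈ T := by
  by_contra hn
  obtain ⟨f, hf, a, b, c, d, hab, hcd, e1, rfl, hh⟩ := hT.2.2.2 {x, y}
    ⟨⟨Finset.card_pair hxy.ne, by
      intro z hz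
      simp only [Finset.mem_insert, Finset.mem_singleton] at hz
      omega⟩, fun ⟨i, hi, e⟩ => hn (e ▸ hT.2.1 i hi)⟩ hn
  obtain ⟨rfl, rfl⟩ := (pair_inj hxy hab).1 e1
  exact h c d hcd hf hh

lemma not_X (hT : IsTriangulation n T) {x y u v : ℕ} (hxy : x < y) (huv : u < v)
    (h1 : ({x, y} : Finset ℕ) ∈ T) (h2 : ({u, v} : Finset ℕ) ∈ T) : ¬ X (x, y) (u, v) :=
  fun h => hT.2.2.1 _ h1 _ h2 ((crosses_iff hxy huv).2 h)

/-- The sides `(b, c)` and `(a, d)` of the quadrilateral belong to both triangulations: a chord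
crossing one of them also crosses `(a, c)` or `(b, d)`, so it cannot be in `T ∩ T'`. -/
lemma flipData (hT : IsTriangulation n T) (hT' : IsTriangulation n T') {a b c d : ℕ}
    (hab : a < b) (hbc : b < c) (hcd : c < d)
    (e : T \ T' = {{a, c}}) (e' : T' \ T = {{b, d}}) :
    d < n ∧ FlipData (pairs n (T ∩ T')) a b c d ∧
      pairs n T = insert (a, c) (pairs n (T ∩ T')) ∧
      pairs n T' = insert (b, d) (pairs n (T ∩ T')) := by
  have hac : ({a, c} : Finset ℕ) ∈ T \ T' := e ▸ Finset.mem_singleton_self _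
  have hbd : ({b, d} : Finset ℕ) ∈ T' \ T := e' ▸ Finset.mem_singleton_self _
  rw [Finset.mem_sdiff] at hac hbd
  have hdn : d < n := (hT'.1 _ hbd.1).2 d (by simp)
  have only : ∀ u v, u < v → ({u, v} : Finset ℕ) ∈ T →
      (u = a ∧ v = c) ∨ ({u, v} : Finset ℕ) ∈ T' := by
    intro u v huv hm
    by_cases hm' : ({u, v} : Finset ℕ) ∈ T'
    · exact Or.inr hm'
    · have : ({u, v} : Finset ℕ) ∈ T \ T' := Finset.mem_sdiff.2 ⟨hm, hm'⟩
      rw [e, Finset.mem_singleton] at this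
      exact Or.inl ((pair_inj huv (by omega)).1 this)
  have only' : ∀ u v, u < v → ({u, v} : Finset ℕ) ∈ T' →
      (u = b ∧ v = d) ∨ ({u, v} : Finset ℕ) ∈ T := by
    intro u v huv hm
    by_cases hm' : ({u, v} : Finset ℕ) ∈ T
    · exact Or.inr hm'
    · have : ({u, v} : Finset ℕ) ∈ T' \ T := Finset.mem_sdiff.2 ⟨hm, hm'⟩
      rw [e', Finset.mem_singleton] at this
      exact Or.inl ((pair_inj huv (by omega)).1 this)
  have common : ∀ x y, x < y → y < n → (x, y) ≠ (b, d) →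
      (¬ X (x, y) (a, c)) →
      (∀ u v, u < v → X (x, y) (u, v) → X (u, v) (a, c) ∨ X (u, v) (b, d)) →
      (x, y) ≠ (a, c) → (x, y) ∈ pairs n (T ∩ T') := by
    intro x y hxy hy _ hn1 hX hne
    have hm : ({x, y} : Finset ℕ) ∈ T := by
      refine mem_of_not_crosses hT hxy hy fun u v huv hm hx => ?_
      rcases only u v huv hm with ⟨rfl, rfl⟩ | hm'
      · exact hn1 hx
      · rcases hX u v huv hx with hx' | hx'
        · exact not_X hT huv (by omega) hm hac.1 hx'
        · exact not_X hT' huv (by omega) hm' hbd.1 hx'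
    rcases only x y hxy hm with ⟨rfl, rfl⟩ | hm'
    · exact absurd rfl hne
    · exact mem_pairs.2 ⟨hy, hxy, Finset.mem_inter.2 ⟨hm, hm'⟩⟩
  refine ⟨hdn, ⟨hab, hbc, hcd, ?_, ?_, ?_, ?_, ?_, ?_, ?_⟩, ?_, ?_⟩
  · rintro ⟨x, y⟩ hp
    exact (mem_pairs.1 hp).2.1
  · rintro ⟨x, y⟩ hp
    obtain ⟨_, hxy, hm⟩ := mem_pairs.1 hp
    exact not_X hT hxy (by omega) (Finset.mem_inter.1 hm).1 hac.1
  · rintro ⟨x, y⟩ hp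
    obtain ⟨_, hxy, hm⟩ := mem_pairs.1 hp
    exact not_X hT' hxy (by omega) (Finset.mem_inter.1 hm).2 hbd.1
  · refine common b c hbc (by omega) ?_ ?_ ?_ ?_ <;> simp only [X, ne_eq, Prod.mk.injEq] <;> omega
  · refine common a d (by omega) hdn ?_ ?_ ?_ ?_ <;> simp only [X, ne_eq, Prod.mk.injEq] <;> omega
  · exact fun hp => hac.2 (Finset.mem_inter.1 (mem_pairs.1 hp).2.2).2
  · exact fun hp => hbd.2 (Finset.mem_inter.1 (mem_pairs.1 hp).2.2).1
  · ext ⟨x, y⟩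
    rw [Finset.mem_insert, mem_pairs, mem_pairs, Finset.mem_inter, Prod.mk.injEq]
    constructor
    · rintro ⟨h1, h2, h3⟩
      rcases only x y h2 h3 with h | h
      · exact Or.inl h
      · exact Or.inr ⟨h1, h2, h3, h⟩
    · rintro (⟨rfl, rfl⟩ | ⟨h1, h2, h3, _⟩)
      · exact ⟨by omega, by omega, hac.1⟩
      · exact ⟨h1, h2, h3⟩
  · ext ⟨x, y⟩
    rw [Finset.mem_insert, mem_pairs, mem_pairs, Finset.mem_inter, Prod.mk.injEq]
    constructor
    · rintro ⟨h1, h2, h3⟩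
      rcases only' x y h2 h3 with h | h
      · exact Or.inl h
      · exact Or.inr ⟨h1, h2, h, h3⟩
    · rintro (⟨rfl, rfl⟩ | ⟨h1, h2, _, h3⟩)
      · exact ⟨by omega, by omega, hbd.1⟩
      · exact ⟨h1, h2, h3⟩

lemma colour_ne_of_flip (hT : IsTriangulation n T) (hT' : IsTriangulation n T')
    (h : (T \ T').card = 1) (h' : (T' \ T).card = 1) :
    colour n (pairs n T) ≠ colour n (pairs n T') := by
  obtain ⟨e, he⟩ := Finset.card_eq_one.1 h
  obtain ⟨f, hf⟩ := Finset.card_eq_one.1 h'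
  have hfm : f ∈ T' \ T := hf ▸ Finset.mem_singleton_self _
  rw [Finset.mem_sdiff] at hfm
  -- the new chord is a diagonal, so some chord of `T` crosses it; that chord is not in `T'`
  obtain ⟨g, hg, hfg⟩ := hT.2.2.2 f
    ⟨hT'.1 f hfm.1, fun ⟨i, hi, e⟩ => hfm.2 (e ▸ hT.2.1 i hi)⟩ hfm.2
  have hge : g = e := by
    have : g ∈ T \ T' := Finset.mem_sdiff.2 ⟨hg, fun hg' => hT'.2.2.1 _ hfm.1 _ hg' hfg⟩
    rwa [he, Finset.mem_singleton] at this
  subst hge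
  obtain ⟨a, b, c, d, hab, hcd, rfl, rfl, ⟨h1, h2, h3⟩ | ⟨h1, h2, h3⟩⟩ := hfg
  · obtain ⟨hn, hF, e1, e2⟩ := flipData hT' hT h1 h2 h3 hf he
    have := hF.colour_ne hn
    rw [← e1, ← e2] at this
    exact this.symm
  · obtain ⟨hn, hF, e1, e2⟩ := flipData hT hT' h1 h2 h3 he hf
    have := hF.colour_ne hn
    rw [← e1, ← e2] at this
    exact this

end Flip

/-! ### Counting colours -/

/-- `log₂ n ≤ 3 log₃ n`, because `3 ≤ 2³`. -/
lemma log_bound (n : ℕ) (hn : 4 ≤ n) :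
    Nat.log 2 n ≤ ⌈3 * (Real.log n / Real.log 3)⌉₊ ∧
      1 ≤ ⌈3 * (Real.log n / Real.log 3)⌉₊ := by
  have hn' : (1 : ℝ) < n := by exact_mod_cast (by omega : 1 < n)
  have l0 : 0 < Real.log n := Real.log_pos hn'
  have l2 : 0 < Real.log 2 := Real.log_pos (by norm_num)
  have l3 : 0 < Real.log 3 := Real.log_pos (by norm_num)
  constructor
  · have h1 : (Nat.log 2 n : ℝ) * Real.log 2 ≤ Real.log n := by
      rw [← Real.log_pow]
      refine Real.log_le_log (by positivity) ?_
      exact_mod_cast Nat.pow_log_le_self 2 (by omega)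
    have h2 : Real.log 3 ≤ 3 * Real.log 2 := by
      have : (3 : ℝ) * Real.log 2 = Real.log (2 ^ 3) := by rw [Real.log_pow]; norm_num
      rw [this]
      exact Real.log_le_log (by norm_num) (by norm_num)
    have h3 : (Nat.log 2 n : ℝ) ≤ 3 * (Real.log n / Real.log 3) := by
      rw [← mul_div_assoc, le_div_iff₀ l3]
      have : (0 : ℝ) ≤ Nat.log 2 n := Nat.cast_nonneg _
      nlinarith
    exact_mod_cast h3.trans (Nat.le_ceil _)
  · exact Nat.ceil_pos.2 (by positivity)

end AssocColour

/-- For every `n ≥ 4`, `χ(𝒜ₙ) ≤ 12 · 129 · ⌈3 · log₃ n⌉`. -/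
theorem chromaticNumber_associahedron_le (n : ℕ) (hn : 4 ≤ n) :
    (Associahedron n).chromaticNumber ≤
      ((12 * 129 * ⌈3 * (Real.log n / Real.log 3)⌉₊ : ℕ) : ℕ∞) := by
  let C : (Associahedron n).Coloring
      (ZMod (Nat.log 2 n + 1) × ZMod 9 × ZMod 9 × ZMod 2 × ZMod 2) :=
    SimpleGraph.Coloring.mk (fun T => AssocColour.colour n (AssocColour.pairs n T.1)) (by
      intro T T' h
      rw [Associahedron, SimpleGraph.fromRel_adj] at h
      rcases h.2 with h | h
      · exact AssocColour.colour_ne_of_flip T.2 T'.2 h.1 h.2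
      · exact AssocColour.colour_ne_of_flip T.2 T'.2 h.2 h.1)
  refine C.colorable.chromaticNumber_le.trans ?_
  obtain ⟨h1, h2⟩ := AssocColour.log_bound n hn
  simp only [Fintype.card_prod, ZMod.card]
  exact_mod_cast (by omega)
end

section
/- Let r ≥ 3 be a real number, let n ≥ 4, let T be a triangulation of the n-gon, let e = {A,C} be a type-1 diagonal of T with Q_T(e) = ABCD, and let T' be the triangulation obtained from T by flipping e (so {B,D} ∈ T'). If the three scales σ_{AC}, σ_{BD}, σ_{BC} are pairwise distinct, then (l_{T'}, m_{T'}, r_{T'}, z_{T'}) ≠ (l_T, m_T, r_T, z_T). -/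
/-- The scale of the chord `{U, V}` with respect to the parameter `r`:
`σ_{UV} = ⌈log_r |U - V|⌉`. -/
noncomputable def scale (r : ℝ) (U V : ℕ) : ℤ :=
  ⌈Real.log |(U : ℝ) - (V : ℝ)| / Real.log r⌉

/-- `a b c` (with `a < b < c`) is a triangle of `T`: all three sides are chords of `T`
(in a triangulation of a convex polygon they then bound a common face). -/
def IsTriangleOf (T : Finset (Finset ℕ)) (a b c : ℕ) : Prop :=
  a < b ∧ b < c ∧ ({a, b} : Finset ℕ) ∈ T ∧ ({b, c} : Finset ℕ) ∈ T ∧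
    ({a, c} : Finset ℕ) ∈ T

open Classical in
/-- The vector `(l_T, m_T, r_T, z_T)` counting the type-l, type-m, type-r and type-z
triangles of `T`, where for a triangle `a < b < c`:
type-l means `σ_{bc} = σ_{ac} ≠ σ_{ab}`, type-m means `σ_{ab} = σ_{ac} ≠ σ_{bc}`,
type-r means `σ_{ab} = σ_{bc} ≠ σ_{ac}`, and type-z means all three scales agree. -/
noncomputable def typeVector (r : ℝ) (n : ℕ) (T : Finset (Finset ℕ)) : ℕ × ℕ × ℕ × ℕ :=
  let tris := (Finset.range n ×ˢ Finset.range n ×ˢ Finset.range n).filter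
      (fun p => IsTriangleOf T p.1 p.2.1 p.2.2)
  ((tris.filter (fun p => scale r p.2.1 p.2.2 = scale r p.1 p.2.2 ∧
      scale r p.1 p.2.1 ≠ scale r p.1 p.2.2)).card,
   (tris.filter (fun p => scale r p.1 p.2.1 = scale r p.1 p.2.2 ∧
      scale r p.2.1 p.2.2 ≠ scale r p.1 p.2.2)).card,
   (tris.filter (fun p => scale r p.1 p.2.1 = scale r p.2.1 p.2.2 ∧
      scale r p.1 p.2.2 ≠ scale r p.1 p.2.1)).card,
   (tris.filter (fun p => scale r p.1 p.2.1 = scale r p.2.1 p.2.2 ∧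
      scale r p.1 p.2.1 = scale r p.1 p.2.2)).card)

theorem pair_eq_pair_iff_of_lt {x y u v : ℕ} (h : x < y) (h' : u < v) :
    ({x, y} : Finset ℕ) = {u, v} ↔ x = u ∧ y = v := by
  constructor
  · intro e
    have hx : x ∈ ({u, v} : Finset ℕ) := by simp [← e]
    have hy : y ∈ ({u, v} : Finset ℕ) := by simp [← e]
    have hu : u ∈ ({x, y} : Finset ℕ) := by simp [e]
    simp only [Finset.mem_insert, Finset.mem_singleton] at hx hy hu
    omega
  · rintro ⟨rfl, rfl⟩; rfl

theorem pair_mem_insert_iff {x y u v : ℕ} (R : Finset (Finset ℕ)) (h : x < y) (h' : u < v) :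
    ({x, y} : Finset ℕ) ∈ insert ({u, v} : Finset ℕ) R ↔
      (x = u ∧ y = v) ∨ ({x, y} : Finset ℕ) ∈ R := by
  rw [Finset.mem_insert, pair_eq_pair_iff_of_lt h h']

/-- No two chords of `R` cross, for chords written with increasing endpoints. -/
def NonCrossing (R : Finset (Finset ℕ)) : Prop :=
  ∀ x y u v : ℕ, x < u → u < y → y < v →
    ({x, y} : Finset ℕ) ∈ R → ({u, v} : Finset ℕ) ∈ R → False

theorem isTriangleOf_insert_AC {R : Finset (Finset ℕ)} (hR : NonCrossing R) {A B C D : ℕ}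
    (hAB : A < B) (hBC : B < C) (hCD : C < D)
    (hABm : ({A, B} : Finset ℕ) ∈ R) (hBCm : ({B, C} : Finset ℕ) ∈ R)
    (hCDm : ({C, D} : Finset ℕ) ∈ R) (hADm : ({A, D} : Finset ℕ) ∈ R) (x y z : ℕ) :
    IsTriangleOf (insert ({A, C} : Finset ℕ) R) x y z ↔
      (x = A ∧ y = B ∧ z = C) ∨ (x = A ∧ y = C ∧ z = D) ∨ IsTriangleOf R x y z := by
  have hAC : A < C := hAB.trans hBC
  constructor
  · rintro ⟨hxy, hyz, h1, h2, h3⟩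
    rw [pair_mem_insert_iff R (by omega) hAC] at h1 h2 h3
    rcases h1 with ⟨rfl, rfl⟩ | h1
    -- here `AC` is the side `xy`, and the third vertex is `z > C`
    · replace h2 := h2.resolve_left (by omega)
      replace h3 := h3.resolve_left (by omega)
      rcases lt_trichotomy z D with h | h | h
      · exact (hR x z y D hxy hyz h h3 hCDm).elim
      · exact Or.inr (Or.inl ⟨rfl, rfl, h⟩)
      · exact (hR x D y z hxy hCD h hADm h2).elim
    rcases h2 with ⟨rfl, rfl⟩ | h2
    -- here `AC` is the side `yz`, and the third vertex is `x < A`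
    · replace h3 := h3.resolve_left (by omega)
      exact (hR x z y D hxy hyz hCD h3 hADm).elim
    rcases h3 with ⟨rfl, rfl⟩ | h3
    -- here `AC` is the side `xz`, and `y` lies between `A` and `C`
    · rcases lt_trichotomy y B with h | h | h
      · exact (hR x B y z hxy h hBC hABm h2).elim
      · exact Or.inl ⟨rfl, h, rfl⟩
      · exact (hR x y B z hAB h hyz h1 hBCm).elim
    exact Or.inr (Or.inr ⟨hxy, hyz, h1, h2, h3⟩)
  · rintro (⟨rfl, rfl, rfl⟩ | ⟨rfl, rfl, rfl⟩ | ⟨hxy, hyz, h1, h2, h3⟩)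
    · exact ⟨hAB, hBC, by simp [hABm], by simp [hBCm], by simp⟩
    · exact ⟨hAC, hCD, by simp, by simp [hCDm], by simp [hADm]⟩
    · exact ⟨hxy, hyz, by simp [h1], by simp [h2], by simp [h3]⟩

theorem isTriangleOf_insert_BD {R : Finset (Finset ℕ)} (hR : NonCrossing R) {A B C D : ℕ}
    (hAB : A < B) (hBC : B < C) (hCD : C < D)
    (hABm : ({A, B} : Finset ℕ) ∈ R) (hBCm : ({B, C} : Finset ℕ) ∈ R)
    (hCDm : ({C, D} : Finset ℕ) ∈ R) (hADm : ({A, D} : Finset ℕ) ∈ R) (x y z : ℕ) :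
    IsTriangleOf (insert ({B, D} : Finset ℕ) R) x y z ↔
      (x = A ∧ y = B ∧ z = D) ∨ (x = B ∧ y = C ∧ z = D) ∨ IsTriangleOf R x y z := by
  have hBD : B < D := hBC.trans hCD
  constructor
  · rintro ⟨hxy, hyz, h1, h2, h3⟩
    rw [pair_mem_insert_iff R (by omega) hBD] at h1 h2 h3
    rcases h1 with ⟨rfl, rfl⟩ | h1
    -- here `BD` is the side `xy`, and the third vertex is `z > D`
    · replace h3 := h3.resolve_left (by omega)
      exact (hR A y x z hAB hxy hyz hADm h3).elim
    rcases h2 with ⟨rfl, rfl⟩ | h2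
    -- here `BD` is the side `yz`, and the third vertex is `x < B`
    · replace h3 := h3.resolve_left (by omega)
      rcases lt_trichotomy x A with h | h | h
      · exact (hR x y A z h hAB hyz h1 hADm).elim
      · exact Or.inl ⟨h, rfl, rfl⟩
      · exact (hR A y x z h hxy hyz hABm h3).elim
    rcases h3 with ⟨rfl, rfl⟩ | h3
    -- here `BD` is the side `xz`, and `y` lies between `B` and `D`
    · rcases lt_trichotomy y C with h | h | h
      · exact (hR x C y z hxy h hCD hBCm h2).elim
      · exact Or.inr (Or.inl ⟨rfl, h, rfl⟩)
      · exact (hR x y C z hBC h hyz h1 hCDm).elim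
    exact Or.inr (Or.inr ⟨hxy, hyz, h1, h2, h3⟩)
  · rintro (⟨rfl, rfl, rfl⟩ | ⟨rfl, rfl, rfl⟩ | ⟨hxy, hyz, h1, h2, h3⟩)
    · exact ⟨hAB, hBD, by simp [hABm], by simp, by simp [hADm]⟩
    · exact ⟨hBC, hCD, by simp [hBCm], by simp [hCDm], by simp⟩
    · exact ⟨hxy, hyz, by simp [h1], by simp [h2], by simp [h3]⟩

open Classical in
/-- The finite set of triangles of `T`, as increasing triples of vertices. -/
noncomputable def triangles (n : ℕ) (T : Finset (Finset ℕ)) : Finset (ℕ × ℕ × ℕ) :=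
  (Finset.range n ×ˢ Finset.range n ×ˢ Finset.range n).filter
    (fun p => IsTriangleOf T p.1 p.2.1 p.2.2)

/-- If passing from `R` to `S` creates exactly the two new triangles `t` and `t'`, then the number
of triangles satisfying `P` grows by `[P t] + [P t']`. -/
theorem card_filter_triangles {n : ℕ} {R S : Finset (Finset ℕ)} {t t' : ℕ × ℕ × ℕ}
    (hne : t ≠ t')
    (ht : t.1 < n ∧ t.2.1 < n ∧ t.2.2 < n) (ht' : t'.1 < n ∧ t'.2.1 < n ∧ t'.2.2 < n)
    (htR : ¬ IsTriangleOf R t.1 t.2.1 t.2.2) (htR' : ¬ IsTriangleOf R t'.1 t'.2.1 t'.2.2)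
    (h : ∀ x y z, IsTriangleOf S x y z ↔
      (x = t.1 ∧ y = t.2.1 ∧ z = t.2.2) ∨ (x = t'.1 ∧ y = t'.2.1 ∧ z = t'.2.2) ∨
        IsTriangleOf R x y z)
    (P : ℕ × ℕ × ℕ → Prop) [DecidablePred P] :
    ((triangles n S).filter P).card =
      ((triangles n R).filter P).card + (if P t then 1 else 0) + (if P t' then 1 else 0) := by
  have key : triangles n S = insert t (insert t' (triangles n R)) := by
    ext ⟨x, y, z⟩
    obtain ⟨t1, t2, t3⟩ := t
    obtain ⟨u1, u2, u3⟩ := t'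
    simp only [triangles, Finset.mem_filter, Finset.mem_insert, Finset.mem_product,
      Finset.mem_range, h, Prod.mk.injEq]
    constructor
    · tauto
    · rintro (⟨rfl, rfl, rfl⟩ | ⟨rfl, rfl, rfl⟩ | h) <;> tauto
  have m : t ∉ triangles n R := by simp [triangles, htR]
  have m' : t' ∉ triangles n R := by simp [triangles, htR']
  rw [key, Finset.filter_insert, Finset.filter_insert]
  split_ifs <;> simp [*]

theorem scale_le_iff {r : ℝ} (hr : 3 ≤ r) {U V : ℕ} (h : U < V) (k : ℤ) :
    scale r U V ≤ k ↔ (V : ℝ) - U ≤ r ^ k := by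
  have hUV : (0 : ℝ) < V - U := sub_pos.mpr (by exact_mod_cast h)
  have hr0 : 0 < r := by linarith
  have hlog : 0 < Real.log r := Real.log_pos (by linarith)
  rw [scale, abs_sub_comm, abs_of_pos hUV, Int.ceil_le, div_le_iff₀ hlog, ← Real.log_zpow,
    Real.log_le_log_iff hUV (zpow_pos hr0 k)]

theorem scale_mono {r : ℝ} (hr : 3 ≤ r) {U V X Y : ℕ} (h : X < Y) (hU : U ≤ X) (hV : Y ≤ V) :
    scale r X Y ≤ scale r U V := by
  have h1 := (scale_le_iff hr (show U < V by omega) _).1 le_rfl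
  rw [scale_le_iff hr h]
  have : (U : ℝ) ≤ X := by exact_mod_cast hU
  have : (Y : ℝ) ≤ V := by exact_mod_cast hV
  linarith

/-- If the chord `UY` splits as `UV + VX + XY` with all three scales at most `k`, then its scale
is at most `k + 1`: its length is at most `3 r ^ k ≤ r ^ (k + 1)`. -/
theorem scale_le_of_sum {r : ℝ} (hr : 3 ≤ r) {U V X Y : ℕ} (h1 : U < V) (h2 : V < X) (h3 : X < Y)
    {k : ℤ} (k1 : scale r U V ≤ k) (k2 : scale r V X ≤ k) (k3 : scale r X Y ≤ k) :
    scale r U Y ≤ k + 1 := by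
  rw [scale_le_iff hr (by omega)] at *
  have hr0 : 0 < r := by linarith
  rw [zpow_add_one₀ hr0.ne']
  nlinarith [zpow_pos hr0 k]

/-- The two-term version of `scale_le_of_sum`. -/
theorem scale_le_of_sum_two {r : ℝ} (hr : 3 ≤ r) {U V X : ℕ} (h1 : U < V) (h2 : V < X)
    {k : ℤ} (k1 : scale r U V ≤ k) (k2 : scale r V X ≤ k) :
    scale r U X ≤ k + 1 := by
  rw [scale_le_iff hr (by omega)] at *
  have hr0 : 0 < r := by linarith
  rw [zpow_add_one₀ hr0.ne']
  nlinarith [zpow_pos hr0 k]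

/-- Proposition 1: if `r ≥ 3` and the scales `σ_{AC}`, `σ_{BD}`, `σ_{BC}` are pairwise
distinct, then flipping the type-1 diagonal `{A, C}` (with quadrilateral `ABCD`) changes
the triangle type vector `(l_T, m_T, r_T, z_T)`. -/
theorem typeVector_ne_of_scales_distinct
    (r : ℝ) (hr : 3 ≤ r) (n : ℕ) (hn : 4 ≤ n)
    (T : Finset (Finset ℕ)) (hT : IsTriangulation n T)
    (A B C D : ℕ) (hAB : A < B) (hBC : B < C) (hCD : C < D) (hD : D < n)
    (hABm : ({A, B} : Finset ℕ) ∈ T) (hBCm : ({B, C} : Finset ℕ) ∈ T)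
    (hCDm : ({C, D} : Finset ℕ) ∈ T) (hADm : ({A, D} : Finset ℕ) ∈ T)
    (hACm : ({A, C} : Finset ℕ) ∈ T)
    (h1 : scale r A C ≠ scale r B D) (h2 : scale r A C ≠ scale r B C)
    (h3 : scale r B D ≠ scale r B C) :
    typeVector r n (insert ({B, D} : Finset ℕ) (T.erase ({A, C} : Finset ℕ))) ≠
      typeVector r n T := by
  -- `R` consists of the chords shared by `T` and the flipped triangulation
  set R := T.erase ({A, C} : Finset ℕ) with hRdef
  have hAC : A < C := hAB.trans hBC
  have hBD : B < D := hBC.trans hCD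
  have hTn : NonCrossing T := fun x y u v hxu huy hyv hx hu =>
    hT.2.2.1 _ hx _ hu ⟨x, y, u, v, hxu.trans huy, huy.trans hyv, rfl, rfl, Or.inl ⟨hxu, huy, hyv⟩⟩
  have hRT : ∀ e ∈ R, e ∈ T := fun e he => Finset.mem_of_mem_erase he
  have hRn : NonCrossing R := fun x y u v hxu huy hyv hx hu =>
    hTn x y u v hxu huy hyv (hRT _ hx) (hRT _ hu)
  have hTR : T = insert ({A, C} : Finset ℕ) R := (Finset.insert_erase hACm).symm
  have hACR : ({A, C} : Finset ℕ) ∉ R := Finset.notMem_erase _ _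
  have hBDR : ({B, D} : Finset ℕ) ∉ R := fun h => hTn A C B D hAB hBC hCD hACm (hRT _ h)
  have side : ∀ {x y : ℕ}, x < y → ({x, y} : Finset ℕ) ∈ T → ¬ (x = A ∧ y = C) →
      ({x, y} : Finset ℕ) ∈ R := fun hxy hm hne =>
    Finset.mem_erase.mpr ⟨fun e => hne ((pair_eq_pair_iff_of_lt hxy hAC).1 e), hm⟩
  have hABr := side hAB hABm (by omega)
  have hBCr := side hBC hBCm (by omega)
  have hCDr := side hCD hCDm (by omega)
  have hADr := side (hAB.trans hBD) hADm (by omega)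
  have cT := card_filter_triangles (n := n) (R := R) (S := T) (t := (A, B, C)) (t' := (A, C, D))
    (by simp; omega) (by simp; omega) (by simp; omega)
    (fun h => hACR h.2.2.2.2) (fun h => hACR h.2.2.1)
    (fun x y z => by
      rw [hTR]; exact isTriangleOf_insert_AC hRn hAB hBC hCD hABr hBCr hCDr hADr x y z)
  have cT' := card_filter_triangles (n := n) (R := R) (S := insert ({B, D} : Finset ℕ) R)
    (t := (A, B, D)) (t' := (B, C, D))
    (by simp; omega) (by simp; omega) (by simp; omega)
    (fun h => hBDR h.2.2.2.1) (fun h => hBDR h.2.2.2.2)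
    (isTriangleOf_insert_BD hRn hAB hBC hCD hABr hBCr hCDr hADr)
  intro heq
  simp only [typeVector, Prod.mk.injEq] at heq
  simp only [← triangles.eq_def] at heq
  simp only [cT, cT'] at heq
  obtain ⟨el, em, er, -⟩ := heq
  have m1 := scale_mono hr hAB le_rfl hBC.le
  have m2 := scale_mono hr hBC hAB.le le_rfl
  have m3 := scale_mono hr hBC le_rfl hCD.le
  have m4 := scale_mono hr hCD hBC.le le_rfl
  have m5 := scale_mono hr hAC le_rfl hCD.le
  have m6 := scale_mono hr hBD hAB.le le_rfl
  have s1 := scale_le_of_sum_two hr hAB hBC (le_max_left _ _) (le_max_right _ _)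
  have s2 := scale_le_of_sum_two hr hBC hCD (le_max_left _ _) (le_max_right _ _)
  have s3 := scale_le_of_sum hr hAB hBC hCD ((le_max_left _ _).trans (le_max_left _ _))
    ((le_max_right _ _).trans (le_max_left _ _)) (le_max_right _ _)
  generalize scale r A B = a at *
  generalize scale r B C = b at *
  generalize scale r C D = c at *
  generalize scale r A C = p at *
  generalize scale r B D = q at *
  generalize scale r A D = s at *
  clear cT cT'
  rcases lt_or_gt_of_ne h1 with hpq | hpq
  · have hc : p ≤ c := by omega
    have hs : s ≤ c + 1 := by omega
    -- no new triangle is of type m or r, so `ABC` is not of type m and `ACD` not of type r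
    have hap : a ≠ p := by intro h; split_ifs at em <;> omega
    have hcp : c ≠ p := by intro h; split_ifs at er <;> omega
    split_ifs at el <;> omega
  · have ha : q ≤ a := by omega
    have hs : s ≤ a + 1 := by omega
    -- no old triangle is of type l or r, so `BCD` is not of type l and `ABD` not of type r
    have hcq : c ≠ q := by intro h; split_ifs at el <;> omega
    have haq : a ≠ q := by intro h; split_ifs at er <;> omega
    split_ifs at em <;> omega
end

section
/- Let r ≥ 3 be a real number, let n ≥ 4, let T be a triangulation of the n-gon, let e = {A,C} be a type-1 diagonal of T with Q_T(e) = ABCD, and let T' be the triangulation obtained from T by flipping e. If σ_{AC} = σ_{BD} = σ_{BC} and (l_{T'}, m_{T'}, r_{T'}, z_{T'}) = (l_T, m_T, r_T, z_T), then either σ_{AD} = σ_{BC} or σ_{AB} = σ_{BC} = σ_{CD}. -/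
lemma pair_eq_pair_of_lt {a b c d : ℕ} (hab : a < b) (hcd : c < d)
    (h : ({a, b} : Finset ℕ) = {c, d}) : a = c ∧ b = d := by
  have ha : a ∈ ({c, d} : Finset ℕ) := by rw [← h]; simp
  have hb : b ∈ ({c, d} : Finset ℕ) := by rw [← h]; simp
  have hc : c ∈ ({a, b} : Finset ℕ) := by rw [h]; simp
  simp only [Finset.mem_insert, Finset.mem_singleton] at ha hb hc
  omega

lemma IsTriangulation.not_interleaved {n : ℕ} {T : Finset (Finset ℕ)} (hT : IsTriangulation n T)
    {a b c d : ℕ} (hab : ({a, b} : Finset ℕ) ∈ T) (hcd : ({c, d} : Finset ℕ) ∈ T) :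
    ¬ (a < c ∧ c < b ∧ b < d) := fun h =>
  hT.2.2.1 _ hab _ hcd ⟨a, b, c, d, by omega, by omega, rfl, rfl, Or.inl h⟩

lemma mem_flip_iff {T : Finset (Finset ℕ)} {A B C D a b : ℕ} (hAC : A < C) (hBD : B < D)
    (hab : a < b) :
    ({a, b} : Finset ℕ) ∈ insert ({B, D} : Finset ℕ) (T.erase ({A, C} : Finset ℕ)) ↔
      (a = B ∧ b = D) ∨ (¬ (a = A ∧ b = C) ∧ ({a, b} : Finset ℕ) ∈ T) := by
  have key : ∀ {c d : ℕ}, c < d → (({a, b} : Finset ℕ) = {c, d} ↔ a = c ∧ b = d) := fun hcd =>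
    ⟨pair_eq_pair_of_lt hab hcd, by rintro ⟨rfl, rfl⟩; rfl⟩
  rw [Finset.mem_insert, Finset.mem_erase, key hBD, Ne, key hAC]

/-- A vertex joined within `T` to both ends of `AC` can only be `B` or `D`: anywhere else, one of
the two joining chords would cross a side of `ABCD`. -/
lemma third_vertex_of_side_AC {n : ℕ} {T : Finset (Finset ℕ)} (hT : IsTriangulation n T)
    {A B C D X : ℕ} (hAB : A < B) (hBC : B < C) (hCD : C < D)
    (hABm : ({A, B} : Finset ℕ) ∈ T) (hBCm : ({B, C} : Finset ℕ) ∈ T)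
    (hCDm : ({C, D} : Finset ℕ) ∈ T) (hADm : ({A, D} : Finset ℕ) ∈ T)
    (hXA : X ≠ A) (hXC : X ≠ C)
    (hA : ({A, X} : Finset ℕ) ∈ T) (hC : ({C, X} : Finset ℕ) ∈ T) : X = B ∨ X = D := by
  have hC' : ({X, C} : Finset ℕ) ∈ T := by rwa [Finset.pair_comm]
  have c1 := hT.not_interleaved hC' hADm
  have c2 := hT.not_interleaved hABm hC'
  have c3 := hT.not_interleaved hA hBCm
  have c4 := hT.not_interleaved hA hCDm
  have c5 := hT.not_interleaved hADm hC
  omega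

/-- A vertex joined within `T` to both ends of `BD` can only be `A` or `C`. The chord `BD` itself
need not lie in `T`. -/
lemma third_vertex_of_side_BD {n : ℕ} {T : Finset (Finset ℕ)} (hT : IsTriangulation n T)
    {A B C D X : ℕ} (hAB : A < B) (hBC : B < C) (hCD : C < D)
    (hABm : ({A, B} : Finset ℕ) ∈ T) (hBCm : ({B, C} : Finset ℕ) ∈ T)
    (hCDm : ({C, D} : Finset ℕ) ∈ T) (hADm : ({A, D} : Finset ℕ) ∈ T)
    (hXB : X ≠ B) (hXD : X ≠ D)
    (hB : ({B, X} : Finset ℕ) ∈ T) (hD : ({D, X} : Finset ℕ) ∈ T) : X = A ∨ X = C := by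
  have hB' : ({X, B} : Finset ℕ) ∈ T := by rwa [Finset.pair_comm]
  have hD' : ({X, D} : Finset ℕ) ∈ T := by rwa [Finset.pair_comm]
  have c1 := hT.not_interleaved hB' hADm
  have c2 := hT.not_interleaved hABm hD'
  have c3 := hT.not_interleaved hBCm hD'
  have c4 := hT.not_interleaved hB hCDm
  have c5 := hT.not_interleaved hADm hB
  omega

/-- The flip creates no triangles other than `ABD` and `BCD`. -/
lemma isTriangleOf_of_flip {n : ℕ} {T : Finset (Finset ℕ)} (hT : IsTriangulation n T)
    {A B C D : ℕ} (hAB : A < B) (hBC : B < C) (hCD : C < D)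
    (hABm : ({A, B} : Finset ℕ) ∈ T) (hBCm : ({B, C} : Finset ℕ) ∈ T)
    (hCDm : ({C, D} : Finset ℕ) ∈ T) (hADm : ({A, D} : Finset ℕ) ∈ T) {a b c : ℕ}
    (h : IsTriangleOf (insert ({B, D} : Finset ℕ) (T.erase ({A, C} : Finset ℕ))) a b c) :
    IsTriangleOf T a b c ∨ (a = A ∧ b = B ∧ c = D) ∨ (a = B ∧ b = C ∧ c = D) := by
  obtain ⟨hab, hbc, m1, m2, m3⟩ := h
  rw [mem_flip_iff (by omega) (by omega) (by omega)] at m1 m2 m3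
  have key := fun X => third_vertex_of_side_BD (X := X) hT hAB hBC hCD hABm hBCm hCDm hADm
  rcases m1 with ⟨rfl, rfl⟩ | ⟨-, m1⟩
  · have m2' := (m2.resolve_left (by omega)).2
    have m3' := (m3.resolve_left (by omega)).2
    have := key c (by omega) (by omega) m3' m2'
    omega
  rcases m2 with ⟨rfl, rfl⟩ | ⟨-, m2⟩
  · have m3' := (m3.resolve_left (by omega)).2
    rw [Finset.pair_comm] at m1 m3'
    have := key a (by omega) (by omega) m1 m3'
    omega
  rcases m3 with ⟨rfl, rfl⟩ | ⟨-, m3⟩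
  · rw [Finset.pair_comm] at m2
    have := key b (by omega) (by omega) m1 m2
    omega
  exact Or.inl ⟨hab, hbc, m1, m2, m3⟩

/-- The flip destroys no triangles other than `ABC` and `ACD`. -/
lemma isTriangleOf_flip {n : ℕ} {T : Finset (Finset ℕ)} (hT : IsTriangulation n T)
    {A B C D : ℕ} (hAB : A < B) (hBC : B < C) (hCD : C < D)
    (hABm : ({A, B} : Finset ℕ) ∈ T) (hBCm : ({B, C} : Finset ℕ) ∈ T)
    (hCDm : ({C, D} : Finset ℕ) ∈ T) (hADm : ({A, D} : Finset ℕ) ∈ T) {a b c : ℕ}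
    (h : IsTriangleOf T a b c) :
    IsTriangleOf (insert ({B, D} : Finset ℕ) (T.erase ({A, C} : Finset ℕ))) a b c ∨
      (a = A ∧ b = B ∧ c = C) ∨ (a = A ∧ b = C ∧ c = D) := by
  obtain ⟨hab, hbc, m1, m2, m3⟩ := h
  have key := fun X => third_vertex_of_side_AC (X := X) hT hAB hBC hCD hABm hBCm hCDm hADm
  by_cases e1 : a = A ∧ b = C
  · obtain ⟨rfl, rfl⟩ := e1
    have := key c (by omega) (by omega) m3 m2
    omega
  by_cases e2 : b = A ∧ c = C
  · obtain ⟨rfl, rfl⟩ := e2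
    rw [Finset.pair_comm] at m1 m3
    have := key a (by omega) (by omega) m1 m3
    omega
  by_cases e3 : a = A ∧ c = C
  · obtain ⟨rfl, rfl⟩ := e3
    rw [Finset.pair_comm] at m2
    have := key b (by omega) (by omega) m1 m2
    omega
  refine Or.inl ⟨hab, hbc, ?_, ?_, ?_⟩ <;>
    rw [mem_flip_iff (by omega) (by omega) (by omega)]
  exacts [Or.inr ⟨e1, m1⟩, Or.inr ⟨e2, m2⟩, Or.inr ⟨e3, m3⟩]

/-- Proposition 2: if `σ_{AC} = σ_{BD} = σ_{BC}` and flipping the type-1 diagonal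
`{A, C}` (with quadrilateral `ABCD`) leaves the triangle type vector unchanged, then
either `σ_{AD} = σ_{BC}` or `σ_{AB} = σ_{BC} = σ_{CD}`. -/
theorem scale_eq_of_typeVector_eq
    (r : ℝ) (hr : 3 ≤ r) (n : ℕ) (hn : 4 ≤ n)
    (T : Finset (Finset ℕ)) (hT : IsTriangulation n T)
    (A B C D : ℕ) (hAB : A < B) (hBC : B < C) (hCD : C < D) (hD : D < n)
    (hABm : ({A, B} : Finset ℕ) ∈ T) (hBCm : ({B, C} : Finset ℕ) ∈ T)
    (hCDm : ({C, D} : Finset ℕ) ∈ T) (hADm : ({A, D} : Finset ℕ) ∈ T)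
    (hACm : ({A, C} : Finset ℕ) ∈ T)
    (h1 : scale r A C = scale r B D) (h2 : scale r B D = scale r B C)
    (heq : typeVector r n (insert ({B, D} : Finset ℕ) (T.erase ({A, C} : Finset ℕ))) =
      typeVector r n T) :
    scale r A D = scale r B C ∨ (scale r A B = scale r B C ∧ scale r B C = scale r C D) := by
  have hAC : A < C := hAB.trans hBC
  have hBD : B < D := hBC.trans hCD
  have hBDm : ({B, D} : Finset ℕ) ∉ T := fun h =>
    hT.not_interleaved hACm h ⟨hAB, hBC, hCD⟩
  rw [or_iff_not_imp_left]
  intro hAD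
  simp only [typeVector, Prod.mk.injEq] at heq
  obtain ⟨hl, hm, -, -⟩ := heq
  constructor
  · by_contra hx
    -- `ABC` is of type l in `T` and is lost, while neither new triangle is of type l.
    refine (Finset.card_lt_card ?_).ne hl
    rw [Finset.ssubset_iff_of_subset]
    · refine ⟨(A, B, C), ?_, ?_⟩
      · simp only [Finset.mem_filter, Finset.mem_product, Finset.mem_range]
        exact ⟨⟨⟨by omega, by omega, by omega⟩, hAB, hBC, hABm, hBCm, hACm⟩,
          (h1.trans h2).symm, fun h => hx (h.trans (h1.trans h2))⟩
      · simp only [Finset.mem_filter]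
        rintro ⟨⟨-, -, -, -, -, hmem⟩, -⟩
        rw [mem_flip_iff hAC hBD hAC] at hmem
        omega
    · rintro ⟨a, b, c⟩ hp
      simp only [Finset.mem_filter] at hp ⊢
      obtain ⟨⟨hr', htri⟩, ht⟩ := hp
      rcases isTriangleOf_of_flip hT hAB hBC hCD hABm hBCm hCDm hADm htri with
        h | ⟨rfl, rfl, rfl⟩ | ⟨rfl, rfl, rfl⟩
      · exact ⟨⟨hr', h⟩, ht⟩
      · exact absurd (ht.1.symm.trans h2) hAD
      · exact absurd h2.symm ht.2
  · by_contra hy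
    -- `BCD` is a new triangle of type m, while neither lost triangle is of type m.
    refine (Finset.card_lt_card ?_).ne' hm
    rw [Finset.ssubset_iff_of_subset]
    · refine ⟨(B, C, D), ?_, ?_⟩
      · simp only [Finset.mem_filter, Finset.mem_product, Finset.mem_range]
        refine ⟨⟨⟨by omega, by omega, by omega⟩, hBC, hCD, ?_, ?_, ?_⟩,
          h2.symm, fun h => hy (h.trans h2).symm⟩
        · rw [mem_flip_iff hAC hBD hBC]
          exact Or.inr ⟨by omega, hBCm⟩
        · rw [mem_flip_iff hAC hBD hCD]
          exact Or.inr ⟨by omega, hCDm⟩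
        · exact Finset.mem_insert_self _ _
      · simp only [Finset.mem_filter]
        rintro ⟨⟨-, -, -, -, -, hmem⟩, -⟩
        exact hBDm hmem
    · rintro ⟨a, b, c⟩ hp
      simp only [Finset.mem_filter] at hp ⊢
      obtain ⟨⟨hr', htri⟩, ht⟩ := hp
      rcases isTriangleOf_flip hT hAB hBC hCD hABm hBCm hCDm hADm htri with
        h | ⟨rfl, rfl, rfl⟩ | ⟨rfl, rfl, rfl⟩
      · exact ⟨⟨hr', h⟩, ht⟩
      · exact absurd (h1.trans h2).symm ht.2
      · exact absurd (ht.1.symm.trans (h1.trans h2)) hAD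
end
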